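/- arXiv:2512.05817 — 5 statements merged into one kernel-verified Lean document; each statement's English description precedes it below -/
import Mathlib

section
/- Let E be a real normed space, η > 0, κ ≥ 0, ρ ∈ (0,1), L_R ≥ 0, D ≥ 0. Let P : E → (E →L[ℝ] E) with ‖P θ‖ ≤ κ for all θ, let G_s, G_τ : E → E with ‖G_s θ − G_τ θ‖ ≤ D for all θ, and define Φ_s(θ) := θ − η • (P θ)(G_s θ), Φ_τ(θ) := θ − η • (P θ)(G_τ θ). Suppose Φ_s is ρ-Lipschitz. Let θ^s, θ^τ : ℕ → E satisfy θ^s_{t+1} = Φ_s(θ^s_t) and θ^τ_{t+1} = Φ_τ(θ^τ_t), and let R : E → ℝ be L_R-Lipschitz. Then for every T ∈ ℕ: |R(θ^s_T) − R(θ^τ_T)| ≤ L_R·ρ^T·‖θ^s_0 − θ^τ_0‖ + (L_R·η·κ·D)/(1 − ρ). -/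
/-!
The parameter error `δ_t = ‖θs t - θτ t‖` satisfies `δ_{t+1} ≤ ρ δ_t + η κ D`: comparing both
iterates through `Φs (θτ t)`, the first difference contracts by `ρ`, and the second is
`η • P θ (Gs θ - Gτ θ)` up to sign, of norm at most `η κ D`. Since `C = η κ D / (1 - ρ)` is the
fixed point of this affine recursion, induction gives `δ_T ≤ ρ ^ T δ_0 + C`, and the Lipschitz
bound on the risk `R` multiplies this by `L_R`.
-/

/-- Deterministic core of Theorem 4.2 (single-configuration risk bound):
the test-risk gap between training on synthetic and real data for `T` steps is
bounded by the optimization residual `L_R ρ^T ‖δ_0‖` plus the matching term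
`L_R η κ D / (1 − ρ)`. -/
theorem single_configuration_risk_bound
    {E : Type*} [NormedAddCommGroup E] [NormedSpace ℝ E]
    (η κ ρ L_R D : ℝ) (hη : 0 < η) (hκ : 0 ≤ κ)
    (hρ : ρ ∈ Set.Ioo (0 : ℝ) 1) (hLR : 0 ≤ L_R) (hD : 0 ≤ D)
    (P : E → (E →L[ℝ] E)) (hP : ∀ θ : E, ‖P θ‖ ≤ κ)
    (Gs Gτ : E → E) (hGap : ∀ θ : E, ‖Gs θ - Gτ θ‖ ≤ D)
    (Φs Φτ : E → E)
    (hΦs : ∀ θ : E, Φs θ = θ - η • (P θ) (Gs θ))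
    (hΦτ : ∀ θ : E, Φτ θ = θ - η • (P θ) (Gτ θ))
    (hLip : ∀ x y : E, ‖Φs x - Φs y‖ ≤ ρ * ‖x - y‖)
    (θs θτ : ℕ → E)
    (hθs : ∀ t : ℕ, θs (t + 1) = Φs (θs t))
    (hθτ : ∀ t : ℕ, θτ (t + 1) = Φτ (θτ t))
    (R : E → ℝ) (hR : ∀ x y : E, |R x - R y| ≤ L_R * ‖x - y‖) :
    ∀ T : ℕ, |R (θs T) - R (θτ T)| ≤
      L_R * ρ ^ T * ‖θs 0 - θτ 0‖ + (L_R * η * κ * D) / (1 - ρ) := by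
  obtain ⟨hρ0, hρ1⟩ := hρ
  have h1 : 0 < 1 - ρ := by linarith
  have hpert : ∀ θ : E, ‖Φs θ - Φτ θ‖ ≤ η * (κ * D) := by
    intro θ
    have e : Φs θ - Φτ θ = -(η • (P θ) (Gs θ - Gτ θ)) := by
      rw [hΦs, hΦτ, map_sub, smul_sub]
      abel
    rw [e, norm_neg, norm_smul, Real.norm_of_nonneg hη.le]
    exact mul_le_mul_of_nonneg_left
      ((P θ).le_of_opNorm_le_of_le (hP θ) (hGap θ)) hη.le
  -- `C` is the fixed point of the error recursion `δ ↦ ρ δ + η κ D`.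
  obtain ⟨C, hC⟩ : ∃ C : ℝ, C = η * (κ * D) / (1 - ρ) := ⟨_, rfl⟩
  have hfix : ρ * C + η * (κ * D) = C := by
    rw [hC]
    field_simp
    ring
  have hC0 : 0 ≤ C := by
    rw [hC]
    positivity
  have hδ : ∀ T : ℕ, ‖θs T - θτ T‖ ≤ ρ ^ T * ‖θs 0 - θτ 0‖ + C := by
    intro T
    induction T with
    | zero => simpa using hC0
    | succ t ih =>
      rw [hθs, hθτ]
      calc ‖Φs (θs t) - Φτ (θτ t)‖
          ≤ ‖Φs (θs t) - Φs (θτ t)‖ + ‖Φs (θτ t) - Φτ (θτ t)‖ :=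
            norm_sub_le_norm_sub_add_norm_sub _ _ _
        _ ≤ ρ * ‖θs t - θτ t‖ + η * (κ * D) := add_le_add (hLip _ _) (hpert _)
        _ ≤ ρ * (ρ ^ t * ‖θs 0 - θτ 0‖ + C) + η * (κ * D) := by gcongr
        _ = ρ ^ (t + 1) * ‖θs 0 - θτ 0‖ + (ρ * C + η * (κ * D)) := by ring
        _ = ρ ^ (t + 1) * ‖θs 0 - θτ 0‖ + C := by rw [hfix]
  intro T
  calc |R (θs T) - R (θτ T)| ≤ L_R * ‖θs T - θτ T‖ := hR _ _
    _ ≤ L_R * (ρ ^ T * ‖θs 0 - θτ 0‖ + C) := mul_le_mul_of_nonneg_left (hδ T) hLR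
    _ = L_R * ρ ^ T * ‖θs 0 - θτ 0‖ + (L_R * η * κ * D) / (1 - ρ) := by
      rw [hC]
      ring
end

section
/- Let E be a real normed space, ρ ∈ (0,1), c ≥ 0, L_R ≥ 0. Let Φ^s, Φ^τ, Ψ^s, Ψ^τ : E → E with Φ^s and Φ^τ both ρ-Lipschitz, and ‖Φ^s θ − Ψ^s θ‖ ≤ c and ‖Φ^τ θ − Ψ^τ θ‖ ≤ c for all θ. Let θ^{s,a}, θ^{τ,a}, θ^{s,a'}, θ^{τ,a'} : ℕ → E be the iterate sequences of Φ^s, Φ^τ, Ψ^s, Ψ^τ respectively, with shared initializations θ^{s,a}_0 = θ^{s,a'}_0 and θ^{τ,a}_0 = θ^{τ,a'}_0. Let R : E → ℝ be L_R-Lipschitz. Then for every T ∈ ℕ: |R(θ^{s,a}_T) − R(θ^{τ,a}_T)| ≤ |R(θ^{s,a'}_T) − R(θ^{τ,a'}_T)| + 2·L_R·c/(1 − ρ). -/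
/-!
Iterates of a `ρ`-contraction and of a `c`-perturbation of it, started at the same point, stay
within `c / (1 - ρ)` of each other, since this radius is the fixed point of the error recursion
`e ↦ ρ e + c` (`norm_iterate_sub_le`). Applying this to the synthetic and to the real trajectory
and passing through the Lipschitz risk `R`, each of the two risks moves by at most
`L_R c / (1 - ρ)`; the triangle inequality adds the two contributions.
-/

/-- Only the unperturbed map `Φ` has to contract: the one-step error is split at `Φ (v t)`. -/
lemma norm_iterate_sub_le {E : Type*} [NormedAddCommGroup E] {Φ Ψ : E → E} {ρ c : ℝ}
    (hρ : ρ ∈ Set.Ioo (0 : ℝ) 1) (hc : 0 ≤ c)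
    (hΦ : ∀ x y : E, ‖Φ x - Φ y‖ ≤ ρ * ‖x - y‖) (hg : ∀ θ : E, ‖Φ θ - Ψ θ‖ ≤ c)
    {u v : ℕ → E} (hu : ∀ t, u (t + 1) = Φ (u t)) (hv : ∀ t, v (t + 1) = Ψ (v t))
    (h0 : u 0 = v 0) (T : ℕ) : ‖u T - v T‖ ≤ c / (1 - ρ) := by
  have h1 : 0 < 1 - ρ := sub_pos.2 hρ.2
  induction T with
  | zero => simpa [h0] using div_nonneg hc h1.le
  | succ t ih =>
    rw [hu, hv]
    calc ‖Φ (u t) - Ψ (v t)‖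
        ≤ ‖Φ (u t) - Φ (v t)‖ + ‖Φ (v t) - Ψ (v t)‖ := norm_sub_le_norm_sub_add_norm_sub _ _ _
      _ ≤ ρ * ‖u t - v t‖ + c := add_le_add (hΦ _ _) (hg _)
      _ ≤ ρ * (c / (1 - ρ)) + c := by
        have := mul_le_mul_of_nonneg_left ih hρ.1.le
        linarith
      _ = c / (1 - ρ) := by
        field_simp
        ring

/-- Steps D.1.3 / Eq. (tri-transfer): the risk gap at configuration `a` exceeds
the risk gap at the cover center `a'` by at most `2 L_R c / (1 − ρ)`, where `c`
is the uniform update-field gap between the two configurations. -/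
theorem risk_gap_transfer_across_configurations
    {E : Type*} [NormedAddCommGroup E] [NormedSpace ℝ E]
    (Φs Φτ Ψs Ψτ : E → E) (ρ c L_R : ℝ)
    (hρ : ρ ∈ Set.Ioo (0 : ℝ) 1) (hc : 0 ≤ c) (hLR : 0 ≤ L_R)
    (hΦs : ∀ x y : E, ‖Φs x - Φs y‖ ≤ ρ * ‖x - y‖)
    (hΦτ : ∀ x y : E, ‖Φτ x - Φτ y‖ ≤ ρ * ‖x - y‖)
    (hgs : ∀ θ : E, ‖Φs θ - Ψs θ‖ ≤ c)
    (hgτ : ∀ θ : E, ‖Φτ θ - Ψτ θ‖ ≤ c)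
    (θsa θτa θsa' θτa' : ℕ → E)
    (hθsa : ∀ t : ℕ, θsa (t + 1) = Φs (θsa t))
    (hθτa : ∀ t : ℕ, θτa (t + 1) = Φτ (θτa t))
    (hθsa' : ∀ t : ℕ, θsa' (t + 1) = Ψs (θsa' t))
    (hθτa' : ∀ t : ℕ, θτa' (t + 1) = Ψτ (θτa' t))
    (hinit_s : θsa 0 = θsa' 0) (hinit_τ : θτa 0 = θτa' 0)
    (R : E → ℝ) (hR : ∀ x y : E, |R x - R y| ≤ L_R * ‖x - y‖) :
    ∀ T : ℕ, |R (θsa T) - R (θτa T)| ≤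
      |R (θsa' T) - R (θτa' T)| + 2 * L_R * c / (1 - ρ) := by
  intro T
  have hs := (hR (θsa T) (θsa' T)).trans (mul_le_mul_of_nonneg_left
    (norm_iterate_sub_le hρ hc hΦs hgs hθsa hθsa' hinit_s T) hLR)
  have hτ := (hR (θτa T) (θτa' T)).trans (mul_le_mul_of_nonneg_left
    (norm_iterate_sub_le hρ hc hΦτ hgτ hθτa hθτa' hinit_τ T) hLR)
  have he : 2 * L_R * c / (1 - ρ) = L_R * (c / (1 - ρ)) + L_R * (c / (1 - ρ)) := by ring
  rw [he]
  have hgap := le_abs_self (R (θsa' T) - R (θτa' T))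
  have hgap' := neg_abs_le (R (θsa' T) - R (θτa' T))
  rw [abs_le] at hs hτ ⊢
  constructor <;> linarith [hs.1, hs.2, hτ.1, hτ.2]
end

section
/- Let E be a real normed space, η > 0, L_θ ≥ 0, and F_s, F_τ : E → E with F_τ L_θ-Lipschitz. Let θ^s, θ^τ : ℕ → E satisfy θ^s_{t+1} = θ^s_t − η • F_s(θ^s_t) and θ^τ_{t+1} = θ^τ_t − η • F_τ(θ^τ_t), and set Δ_t := θ^s_t − θ^τ_t. Then for every t ∈ ℕ: ‖F_s(θ^s_t) − F_τ(θ^s_t)‖ ≤ (L_θ + 2/η) · max(‖Δ_t‖, ‖Δ_{t+1}‖). -/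
/-!
The field discrepancy at the synthetic iterate splits, via `Fτ (θτ t)`, into the difference of
the two update directions and a Lipschitz term. The first equals `(Δ t - Δ (t + 1)) / η`, where
`Δ t = θs t - θτ t`, by subtracting the two recursions, and so contributes `2 / η` times the
larger gap; the second contributes `L_θ` times the current gap.
-/

/-- Step E.3.1 / Eq. (pointwise-bound-1) of the Trajectory-Matching bridge:
along the two unrolled trajectories, the field discrepancy at the synthetic
iterate is bounded by `(L_θ + 2/η)` times the larger of the current and next
parameter gaps. -/
theorem tm_bridge_pointwise
    {E : Type*} [NormedAddCommGroup E] [NormedSpace ℝ E]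
    (η L_θ : ℝ) (hη : 0 < η) (hLθ : 0 ≤ L_θ)
    (Fs Fτ : E → E)
    (hFτ : ∀ x y : E, ‖Fτ x - Fτ y‖ ≤ L_θ * ‖x - y‖)
    (θs θτ : ℕ → E)
    (hθs : ∀ t : ℕ, θs (t + 1) = θs t - η • Fs (θs t))
    (hθτ : ∀ t : ℕ, θτ (t + 1) = θτ t - η • Fτ (θτ t)) :
    ∀ t : ℕ, ‖Fs (θs t) - Fτ (θs t)‖ ≤
      (L_θ + 2 / η) * max ‖θs t - θτ t‖ ‖θs (t + 1) - θτ (t + 1)‖ := by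
  intro t
  set M := max ‖θs t - θτ t‖ ‖θs (t + 1) - θτ (t + 1)‖ with hM
  -- The field difference along the two trajectories is the scaled decrement of the gap.
  have hid : Fs (θs t) - Fτ (θτ t) =
      η⁻¹ • ((θs t - θτ t) - (θs (t + 1) - θτ (t + 1))) := by
    rw [eq_inv_smul_iff₀ hη.ne', hθs, hθτ, smul_sub]
    abel
  have hgap : ‖Fs (θs t) - Fτ (θτ t)‖ ≤ η⁻¹ * (M + M) := by
    rw [hid, norm_smul, Real.norm_of_nonneg (inv_nonneg.2 hη.le)]
    refine mul_le_mul_of_nonneg_left ?_ (inv_nonneg.2 hη.le)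
    exact (norm_sub_le _ _).trans (add_le_add (le_max_left _ _) (le_max_right _ _))
  have hlip : ‖Fτ (θτ t) - Fτ (θs t)‖ ≤ L_θ * M := by
    rw [norm_sub_rev]
    exact (hFτ _ _).trans (mul_le_mul_of_nonneg_left (le_max_left _ _) hLθ)
  calc ‖Fs (θs t) - Fτ (θs t)‖
      ≤ ‖Fs (θs t) - Fτ (θτ t)‖ + ‖Fτ (θτ t) - Fτ (θs t)‖ :=
        norm_sub_le_norm_sub_add_norm_sub _ _ _
    _ ≤ η⁻¹ * (M + M) + L_θ * M := add_le_add hgap hlip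
    _ = (L_θ + 2 / η) * M := by ring
end

section
/- Let E be a real inner product space and f : E → ℝ differentiable with gradient ∇f that is L-Lipschitz (L > 0). Suppose f satisfies the Polyak–Łojasiewicz (PL) inequality with constant μ > 0 relative to a lower bound f⋆ (i.e., f⋆ ≤ f(x) for all x and (1/2)·‖∇f(x)‖² ≥ μ·(f(x) − f⋆) for all x), and assume μ·η ≤ 2 with η ∈ (0, 1/L]. Let β ≥ 0, let e : ℕ → E satisfy ‖e_j‖ ≤ β for all j, and let x : ℕ → E satisfy x_{j+1} = x_j − η • (∇f(x_j) + e_j). Then for every J ∈ ℕ: f(x_J) − f⋆ ≤ (1 − μ·η/2)^J · (f(x₀) − f⋆) + 2·β²/μ. -/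
/-!
The descent lemma for an `L`-smooth function, applied with step `-η (∇f x + e)` and `L η ≤ 1`,
gives `f x⁺ ≤ f x - (η/2) ‖∇f x‖² + (η/2) ‖e‖²`, since
`-⟪g, g + e⟫ + ‖g + e‖² / 2 = (‖e‖² - ‖g‖²) / 2`. The PL inequality turns this into the
one-step recursion `gap⁺ ≤ (1 - μη) gap + ηβ²/2`, and `2β²/μ` is preserved (with room to spare)
by the weaker contraction with factor `1 - μη/2`, so induction on the number of steps concludes.
-/

/-- The quadratic upper bound for an `L`-smooth function: along the segment from `x` to `x + v`,
`t ↦ f (x + t v) - t ⟪∇f x, v⟫ - (L/2) t² ‖v‖²` is antitone. -/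
lemma descent_lemma {E : Type*} [NormedAddCommGroup E] [InnerProductSpace ℝ E] [CompleteSpace E]
    (f : E → ℝ) (L : ℝ) (hf : Differentiable ℝ f)
    (hgrad : ∀ x y : E, ‖gradient f x - gradient f y‖ ≤ L * ‖x - y‖) (x v : E) :
    f (x + v) ≤ f x + inner ℝ (gradient f x) v + L / 2 * ‖v‖ ^ 2 := by
  have hd : ∀ t : ℝ, HasDerivAt
      (fun t : ℝ => f (x + t • v) - t * inner ℝ (gradient f x) v - L / 2 * ‖v‖ ^ 2 * t ^ 2)
      (inner ℝ (gradient f (x + t • v)) v - inner ℝ (gradient f x) v - L * ‖v‖ ^ 2 * t) t := by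
    intro t
    have h1 : HasDerivAt (fun t : ℝ => x + t • v) v t := by
      simpa using ((hasDerivAt_id t).smul_const v).const_add x
    have h2 := (hf (x + t • v)).hasGradientAt.hasFDerivAt.comp_hasDerivAt t h1
    have h3 : HasDerivAt (fun t : ℝ => t * inner ℝ (gradient f x) v)
        (inner ℝ (gradient f x) v) t := by
      simpa using (hasDerivAt_id t).mul_const (inner ℝ (gradient f x) v)
    have h4 : HasDerivAt (fun t : ℝ => L / 2 * ‖v‖ ^ 2 * t ^ 2) (L * ‖v‖ ^ 2 * t) t := by
      refine ((hasDerivAt_pow 2 t).const_mul (L / 2 * ‖v‖ ^ 2)).congr_deriv ?_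
      rw [Nat.add_one_sub_one, pow_one]
      push_cast
      ring
    exact (h2.sub h3).sub h4
  have hanti := antitoneOn_of_deriv_nonpos (convex_Icc (0 : ℝ) 1)
    (fun t _ => (hd t).continuousAt.continuousWithinAt)
    (fun t _ => (hd t).differentiableAt.differentiableWithinAt)
    (fun t ht => by
      rw [interior_Icc] at ht
      rw [(hd t).deriv, ← inner_sub_left]
      have h1 := real_inner_le_norm (gradient f (x + t • v) - gradient f x) v
      have h2 := hgrad (x + t • v) x
      rw [add_sub_cancel_left, norm_smul, Real.norm_of_nonneg ht.1.le] at h2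
      nlinarith [mul_le_mul_of_nonneg_right h2 (norm_nonneg v)])
  have h := hanti (Set.left_mem_Icc.2 zero_le_one) (Set.right_mem_Icc.2 zero_le_one) zero_le_one
  simp only [one_smul, zero_smul, add_zero] at h
  linarith

/-- Biased-estimator case of the outer-loop surrogate contraction (Eq. (13)
with the estimation floor, Steps E.2.3–E.2.6): gradient descent with gradient
errors bounded by `β` on an `L`-smooth PL objective contracts the surrogate
gap at rate `1 − μη/2` down to the floor `2β²/μ`. -/
theorem pl_biased_gradient_descent_contraction
    {E : Type*} [NormedAddCommGroup E] [InnerProductSpace ℝ E] [CompleteSpace E]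
    (f : E → ℝ) (L μ η fstar β : ℝ) (hL : 0 < L) (hμ : 0 < μ)
    (hf : Differentiable ℝ f)
    (hgrad : ∀ x y : E, ‖gradient f x - gradient f y‖ ≤ L * ‖x - y‖)
    (hlb : ∀ x : E, fstar ≤ f x)
    (hPL : ∀ x : E, μ * (f x - fstar) ≤ (1 / 2) * ‖gradient f x‖ ^ 2)
    (hη : 0 < η) (hηL : η ≤ 1 / L) (hμη : μ * η ≤ 2)
    (hβ : 0 ≤ β)
    (e : ℕ → E) (he : ∀ j : ℕ, ‖e j‖ ≤ β)
    (x : ℕ → E) (hx : ∀ j : ℕ, x (j + 1) = x j - η • (gradient f (x j) + e j)) :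
    ∀ J : ℕ, f (x J) - fstar ≤
      (1 - μ * η / 2) ^ J * (f (x 0) - fstar) + 2 * β ^ 2 / μ := by
  have hLη : L * η ≤ 1 := by
    rw [le_div_iff₀ hL] at hηL
    linarith
  have hstep : ∀ j, f (x (j + 1)) - fstar ≤
      (1 - μ * η) * (f (x j) - fstar) + η / 2 * β ^ 2 := by
    intro j
    have hdesc := descent_lemma f L hf hgrad (x j) (-(η • (gradient f (x j) + e j)))
    rw [← sub_eq_add_neg, ← hx, norm_neg, norm_smul, Real.norm_of_nonneg hη.le, inner_neg_right,
      real_inner_smul_right, inner_add_right, real_inner_self_eq_norm_sq, mul_pow] at hdesc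
    have hsq := norm_add_sq_real (gradient f (x j)) (e j)
    have he2 : ‖e j‖ ^ 2 ≤ β ^ 2 := pow_le_pow_left₀ (norm_nonneg _) (he j) 2
    have hquad : L / 2 * (η ^ 2 * ‖gradient f (x j) + e j‖ ^ 2) ≤
        η / 2 * ‖gradient f (x j) + e j‖ ^ 2 := by
      have := mul_le_mul_of_nonneg_right hLη
        (by positivity : 0 ≤ η / 2 * ‖gradient f (x j) + e j‖ ^ 2)
      linarith
    rw [hsq] at hquad hdesc
    have h1 := mul_le_mul_of_nonneg_left (hPL (x j)) hη.le
    have h2 := mul_le_mul_of_nonneg_left he2 hη.le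
    linarith
  intro J
  induction J with
  | zero =>
    have : 0 ≤ 2 * β ^ 2 / μ := by positivity
    simpa using this
  | succ j ih =>
    have hrate : 0 ≤ 1 - μ * η / 2 := by linarith
    have h1 := mul_le_mul_of_nonneg_left ih hrate
    have h2 : 0 ≤ μ * η / 2 * (f (x j) - fstar) :=
      mul_nonneg (by positivity) (sub_nonneg.2 (hlb _))
    have hfloor : (1 - μ * η / 2) * (2 * β ^ 2 / μ) = 2 * β ^ 2 / μ - η * β ^ 2 := by
      field_simp
    have h3 : 0 ≤ η * β ^ 2 := by positivity
    rw [mul_add, hfloor] at h1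
    rw [pow_succ']
    linarith [hstep j]
end

section
/- Let E be a real normed space, ρ ∈ [0,1), L_b ≥ 1, and for each t let η_t ∈ (0, η_max]. Let F_s, F_τ : E → E and suppose that for each t the map x ↦ x − η_t • F_τ(x) is ρ-Lipschitz. Let θ^s, θ^τ : ℕ → E satisfy θ^s_{t+1} = θ^s_t − η_t • F_s(θ^s_t) and θ^τ_{t+1} = θ^τ_t − η_t • F_τ(θ^τ_t) with θ^s₀ = θ^τ₀, and set Δ_t := θ^s_t − θ^τ_t and δ_t := F_s(θ^s_t) − F_τ(θ^s_t). Let ω : {0,…,L_b} → ℝ with 0 < ω_t ≤ ω_max for all t. Then Σ_{t=0}^{L_b} ω_t·‖Δ_t‖ ≤ (ω_max/(1 − ρ)) · Σ_{t=0}^{L_b−1} η_t·‖δ_t‖ ≤ ((ω_max·η_max)/(1 − ρ)) · Σ_{t=0}^{L_b−1} ‖δ_t‖. -/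
/-!
The gap `a t = ‖θs t - θτ t‖` satisfies `a (t + 1) ≤ ρ * a t + η t * ‖δ t‖`: subtract the two
updates, add and subtract `η t • Fτ (θs t)`, and use the contraction. Summing this recursion with
`a 0 = 0` (`sum_le_of_contractive_recursion`) gives `(1 - ρ) * ∑ a t ≤ ∑ η t * ‖δ t‖`, and the
weights `ω t` and step sizes `η t` are then replaced by their upper bounds.
-/

/-- Discrete Grönwall bound in summed form. The term `ρ * a n` on the left makes the induction
telescope: each step adds exactly `a (n + 1) - ρ * a n` to the left-hand side. -/
lemma sum_le_of_contractive_recursion (ρ : ℝ) (a b : ℕ → ℝ) (h0 : a 0 = 0)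
    (hstep : ∀ t, a (t + 1) ≤ ρ * a t + b t) (n : ℕ) :
    (1 - ρ) * ∑ t ∈ Finset.range (n + 1), a t + ρ * a n ≤ ∑ t ∈ Finset.range n, b t := by
  induction n with
  | zero => simp [h0]
  | succ n ih =>
    rw [Finset.sum_range_succ, Finset.sum_range_succ b]
    linarith [hstep n]

/-- TM-controlled-by-GM comparison (Steps E.4.1–E.4.2 of the exchangeability
theorem): the weighted trajectory-matching surrogate `Σ_t ω_t ‖Δ_t‖` is bounded
by `(ω_max/(1−ρ)) Σ_t η_t ‖δ_t‖`, which is in turn bounded by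
`(ω_max η_max/(1−ρ)) Σ_t ‖δ_t‖`. -/
theorem tm_controlled_by_gm
    {E : Type*} [NormedAddCommGroup E] [NormedSpace ℝ E]
    (ρ η_max ω_max : ℝ) (hρ : ρ ∈ Set.Ico (0 : ℝ) 1)
    (η : ℕ → ℝ) (hη : ∀ t : ℕ, 0 < η t ∧ η t ≤ η_max)
    (Fs Fτ : E → E)
    (hcontr : ∀ t : ℕ, ∀ x y : E,
      ‖(x - η t • Fτ x) - (y - η t • Fτ y)‖ ≤ ρ * ‖x - y‖)
    (θs θτ : ℕ → E)
    (hθs : ∀ t : ℕ, θs (t + 1) = θs t - η t • Fs (θs t))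
    (hθτ : ∀ t : ℕ, θτ (t + 1) = θτ t - η t • Fτ (θτ t))
    (hinit : θs 0 = θτ 0)
    (L_b : ℕ) (hLb : 1 ≤ L_b)
    (ω : ℕ → ℝ) (hω : ∀ t ≤ L_b, 0 < ω t ∧ ω t ≤ ω_max) :
    (∑ t ∈ Finset.range (L_b + 1), ω t * ‖θs t - θτ t‖) ≤
        (ω_max / (1 - ρ)) *
          ∑ t ∈ Finset.range L_b, η t * ‖Fs (θs t) - Fτ (θs t)‖ ∧
      (ω_max / (1 - ρ)) *
          (∑ t ∈ Finset.range L_b, η t * ‖Fs (θs t) - Fτ (θs t)‖) ≤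
        ((ω_max * η_max) / (1 - ρ)) *
          ∑ t ∈ Finset.range L_b, ‖Fs (θs t) - Fτ (θs t)‖ := by
  obtain ⟨hρ0, hρ1⟩ := hρ
  have hpos : 0 < 1 - ρ := by linarith
  have hωmax : 0 ≤ ω_max := (hω 0 (Nat.zero_le _)).1.le.trans (hω 0 (Nat.zero_le _)).2
  have hstep : ∀ t, ‖θs (t + 1) - θτ (t + 1)‖ ≤
      ρ * ‖θs t - θτ t‖ + η t * ‖Fs (θs t) - Fτ (θs t)‖ := by
    intro t
    have hdecomp : θs (t + 1) - θτ (t + 1) =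
        ((θs t - η t • Fτ (θs t)) - (θτ t - η t • Fτ (θτ t))) -
          η t • (Fs (θs t) - Fτ (θs t)) := by
      rw [hθs, hθτ, smul_sub]
      abel
    rw [hdecomp]
    refine (norm_sub_le _ _).trans (add_le_add (hcontr t _ _) ?_)
    rw [norm_smul, Real.norm_of_nonneg (hη t).1.le]
  have hsum := sum_le_of_contractive_recursion ρ (fun t => ‖θs t - θτ t‖)
    (fun t => η t * ‖Fs (θs t) - Fτ (θs t)‖) (by simp [hinit]) hstep L_b
  constructor
  · calc ∑ t ∈ Finset.range (L_b + 1), ω t * ‖θs t - θτ t‖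
        ≤ ∑ t ∈ Finset.range (L_b + 1), ω_max * ‖θs t - θτ t‖ :=
          Finset.sum_le_sum fun t ht => mul_le_mul_of_nonneg_right
            (hω t (Nat.lt_succ_iff.mp (Finset.mem_range.mp ht))).2 (norm_nonneg _)
      _ = ω_max / (1 - ρ) * ((1 - ρ) * ∑ t ∈ Finset.range (L_b + 1), ‖θs t - θτ t‖) := by
          rw [← Finset.mul_sum]
          field_simp
      _ ≤ _ := by
          refine mul_le_mul_of_nonneg_left ?_ (div_nonneg hωmax hpos.le)
          have : 0 ≤ ρ * ‖θs L_b - θτ L_b‖ := by positivity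
          linarith
  · rw [mul_div_right_comm, mul_assoc, Finset.mul_sum _ _ η_max]
    exact mul_le_mul_of_nonneg_left
      (Finset.sum_le_sum fun t _ => mul_le_mul_of_nonneg_right (hη t).2 (norm_nonneg _))
      (div_nonneg hωmax hpos.le)
end
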